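/- For a finite rooted planar tree T, let γ(T) denote the number of restricted morphisms from T into the chain {1 < 2} and let γ̃(T) denote the number of all morphisms from T into the chain {1 < 2}. Then γ of the trivial tree equals 1, γ̃ of the trivial tree equals 2, and for every nontrivial T with principal subtrees T₁,…,T_k: γ(T) = 1 + ∏_{i=1}^k γ(T_i) and γ̃(T) = 1 + ∏_{i=1}^k γ̃(T_i). -/

import Mathlib

/-- A finite rooted planar tree: a single constructor taking the ordered list
of principal subtrees of the root. -/
inductive PTree : Type where
  | node : List PTree → PTree

namespace PTree

/-- The trivial tree, reduced to its root. -/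
def triv : PTree := node []

/-- Whether a tree is trivial. -/
def isTriv : PTree → Bool
  | .node [] => true
  | _ => false

mutual
/-- `d(T)`: the number of leaves of a tree. -/
def leaves : PTree → ℕ
  | .node [] => 1
  | .node (t :: ts) => leavesL (t :: ts)
def leavesL : List PTree → ℕ
  | [] => 0
  | t :: ts => leaves t + leavesL ts
end

mutual
/-- `d°(T)`: the number of internal vertices of a tree. -/
def ints : PTree → ℕ
  | .node [] => 0
  | .node (t :: ts) => 1 + intsL (t :: ts)
def intsL : List PTree → ℕ
  | [] => 0
  | t :: ts => ints t + intsL ts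
end

mutual
/-- The number of vertices of a tree. -/
def verts : PTree → ℕ
  | .node ts => 1 + vertsL ts
def vertsL : List PTree → ℕ
  | [] => 0
  | t :: ts => verts t + vertsL ts
end

/-- A tree is `k`-regular if every internal vertex has exactly `k` sons. -/
inductive Regular (k : ℕ) : PTree → Prop where
  | leaf : Regular k (.node [])
  | node (ts : List PTree) (hlen : ts.length = k) (h : ∀ t ∈ ts, Regular k t) :
      Regular k (.node ts)

end PTree
namespace PTree

/-- `IsVertex T p` means that the address `p` (a path: at each step, the index
of the son to follow) is a vertex of the tree `T`. -/
def IsVertex : PTree → List ℕ → Prop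
  | _, [] => True
  | .node ts, i :: p => ∃ h : i < ts.length, IsVertex ts[i] p

/-- The vertex set of a finite rooted planar tree, partially ordered by
`v ≤ w` iff `v` lies on the path from the root to `w`, i.e. iff the address of
`v` is a prefix of that of `w`. -/
def Vx (T : PTree) : Type := {p : List ℕ // IsVertex T p}

theorem isVertex_nil (T : PTree) : IsVertex T [] := by cases T; simp [IsVertex]

/-- The root of a tree, as a vertex. -/
def rootVx (T : PTree) : Vx T := ⟨[], isVertex_nil T⟩

/-- A morphism from the poset of vertices of `T` into a poset `P`:
an order-preserving map (the vertex order being the prefix order on addresses). -/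
def IsMorph {T : PTree} {P : Type} [Preorder P] (μ : Vx T → P) : Prop :=
  ∀ v w : Vx T, v.val <+: w.val → μ v ≤ μ w

/-- A vertex is a leaf if it has no sons (not even a `0`-th one). -/
def IsLeafVx {T : PTree} (v : Vx T) : Prop := ¬ IsVertex T (v.val ++ [0])

/-- `w` is a son of `v`. -/
def IsSon {T : PTree} (v w : Vx T) : Prop := ∃ i : ℕ, w.val = v.val ++ [i]

/-- The number of restricted morphisms from the vertex poset of `T` into the
chain `{1 < 2 < … < m}` (realized as `Fin m`): order-preserving maps sending
every leaf of `T` to the top element `m` (i.e. `m - 1` in `Fin m`). -/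
noncomputable def restrCount (m : ℕ) (T : PTree) : ℕ :=
  Nat.card {μ : Vx T → Fin m //
    IsMorph μ ∧ ∀ v : Vx T, IsLeafVx v → (μ v : ℕ) = m - 1}

/-- The number of all morphisms from the vertex poset of `T` into the chain
`{1 < 2 < … < m}` (realized as `Fin m`). -/
noncomputable def morphCount (m : ℕ) (T : PTree) : ℕ :=
  Nat.card {μ : Vx T → Fin m // IsMorph μ}

/-- `σ(T)`: the number of surjective morphisms from the vertex poset of `T`
(with `n` vertices) onto the chain `{1 < 2 < … < n}`. -/
noncomputable def surjCount (T : PTree) : ℕ :=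
  Nat.card {μ : Vx T → Fin T.verts // IsMorph μ ∧ Function.Surjective μ}

end PTree

/-! Fix a morphism `μ` from `T` into a chain with `m + 1` elements. If `μ` sends the root to a
non-minimal element, then it avoids the minimum altogether and is a morphism into a chain with `m`
elements. If `μ` sends the root to the minimum, the order imposes nothing between the root and the
other vertices, so `μ` is an arbitrary family of morphisms, one for each principal subtree. Into a
chain with one element there is exactly one morphism, which is the summand `1` when `m = 1`.
Restricted and unrestricted morphisms are treated alike by prescribing the set of values allowed on
leaves. -/

namespace PTree

section Vertices

variable {ts : List PTree}

theorem isVertex_node_cons {i : ℕ} {p : List ℕ} :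
    IsVertex (.node ts) (i :: p) ↔ ∃ h : i < ts.length, IsVertex ts[i] p := by
  rw [IsVertex]

/-- The vertex `w` of the `i`-th principal subtree, viewed as a vertex of the whole tree. -/
def subVx (i : Fin ts.length) (w : Vx ts[i]) : Vx (.node ts) :=
  ⟨i :: w.val, isVertex_node_cons.2 ⟨i.isLt, w.property⟩⟩

@[elab_as_elim]
theorem Vx.node_cases {motive : Vx (.node ts) → Prop} (root : motive (rootVx _))
    (sub : ∀ i w, motive (subVx i w)) (v : Vx (.node ts)) : motive v := by
  obtain ⟨_ | ⟨i, p⟩, hv⟩ := v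
  · exact root
  · obtain ⟨hi, hp⟩ := isVertex_node_cons.1 hv
    exact sub ⟨i, hi⟩ ⟨p, hp⟩

theorem subVx_prefix_subVx_iff {i j : Fin ts.length} {v : Vx ts[i]} {w : Vx ts[j]} :
    (subVx i v).val <+: (subVx j w).val ↔ i = j ∧ v.val <+: w.val := by
  simp only [subVx, List.cons_prefix_cons, Fin.ext_iff]

theorem not_subVx_prefix_rootVx (i : Fin ts.length) (v : Vx ts[i]) :
    ¬ (subVx i v).val <+: (rootVx (.node ts)).val := by
  simp [subVx, rootVx]

theorem isLeafVx_subVx_iff {i : Fin ts.length} {w : Vx ts[i]} :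
    IsLeafVx (subVx i w) ↔ IsLeafVx w := by
  simp [IsLeafVx, subVx, isVertex_node_cons]

theorem isLeafVx_rootVx_node_iff : IsLeafVx (rootVx (.node ts)) ↔ ts = [] := by
  simp [IsLeafVx, rootVx, isVertex_node_cons, isVertex_nil]

instance Vx.finite : (T : PTree) → Finite (Vx T)
  | .node ts => by
    have : ∀ i : Fin ts.length, Finite (Vx ts[i]) := fun i => Vx.finite ts[i]
    refine Finite.of_surjective (α := Option (Σ i : Fin ts.length, Vx ts[i]))
      (fun o => o.elim (rootVx _) fun x => subVx x.1 x.2) fun v => ?_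
    induction v using Vx.node_cases with
    | root => exact ⟨none, rfl⟩
    | sub i w => exact ⟨some ⟨i, w⟩, rfl⟩
termination_by T => T
decreasing_by
  simp only [Fin.getElem_fin, node.sizeOf_spec]
  have subtree_lt := List.sizeOf_lt_of_mem (ts.getElem_mem i.isLt)
  omega

end Vertices

section Graft

variable {P : Type*} {ts : List PTree}

/-- The map sending the root to `p` and restricting to `f i` on the `i`-th principal subtree. -/
def graft (p : P) (f : ∀ i : Fin ts.length, Vx ts[i] → P) : Vx (.node ts) → P
  | ⟨[], _⟩ => p
  | ⟨i :: q, h⟩ => f ⟨i, (isVertex_node_cons.1 h).1⟩ ⟨q, (isVertex_node_cons.1 h).2⟩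

theorem graft_root_sub (μ : Vx (.node ts) → P) :
    graft (μ (rootVx _)) (fun i w => μ (subVx i w)) = μ := by
  funext v
  induction v using Vx.node_cases with
  | root => rfl
  | sub i w => rfl

theorem graft_injective (p : P) :
    Function.Injective (graft p : (∀ i : Fin ts.length, Vx ts[i] → P) → _) :=
  fun _ _ h => funext fun i => funext fun w => congrFun h (subVx i w)

end Graft

section Morphisms

variable {P Q : Type} [Preorder P] [Preorder Q] {T : PTree} {ts : List PTree}

theorem isMorph_node_iff {μ : Vx (.node ts) → P} :
    IsMorph μ ↔ ∀ i : Fin ts.length,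
      IsMorph (fun w => μ (subVx i w)) ∧ ∀ w, μ (rootVx _) ≤ μ (subVx i w) := by
  refine ⟨fun hμ i => ⟨fun v w hvw => hμ _ _ (subVx_prefix_subVx_iff.2 ⟨rfl, hvw⟩),
    fun w => hμ _ _ List.nil_prefix⟩, fun h v w hvw => ?_⟩
  induction v using Vx.node_cases with
  | root =>
    induction w using Vx.node_cases with
    | root => exact le_rfl
    | sub j w => exact (h j).2 w
  | sub i v =>
    induction w using Vx.node_cases with
    | root => exact absurd hvw (not_subVx_prefix_rootVx i v)
    | sub j w =>
      obtain ⟨rfl, hvw⟩ := subVx_prefix_subVx_iff.1 hvw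
      exact (h i).1 v w hvw

/-- The morphisms from `T` whose values on the leaves lie in `L`. Every morphism qualifies when `L`
is the whole poset, and the restricted ones are those for which `L` consists of the top element. -/
def leafMorphs (T : PTree) (L : Set P) : Set (Vx T → P) :=
  {μ | IsMorph μ ∧ ∀ v, IsLeafVx v → μ v ∈ L}

theorem mem_leafMorphs_node_iff {L : Set P} {μ : Vx (.node ts) → P} :
    μ ∈ leafMorphs (.node ts) L ↔ (ts = [] → μ (rootVx _) ∈ L) ∧ ∀ i : Fin ts.length,
      (fun w => μ (subVx i w)) ∈ leafMorphs ts[i] L ∧ ∀ w, μ (rootVx _) ≤ μ (subVx i w) := by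
  have leaf_iff : (∀ v, IsLeafVx v → μ v ∈ L) ↔ (ts = [] → μ (rootVx _) ∈ L) ∧
      ∀ (i : Fin ts.length) (w : Vx ts[i]), IsLeafVx w → μ (subVx i w) ∈ L := by
    refine ⟨fun h => ⟨fun hts => h _ (isLeafVx_rootVx_node_iff.2 hts),
      fun i w hw => h _ (isLeafVx_subVx_iff.2 hw)⟩, fun h v hv => ?_⟩
    induction v using Vx.node_cases with
    | root => exact h.1 (isLeafVx_rootVx_node_iff.1 hv)
    | sub i w => exact h.2 i w (isLeafVx_subVx_iff.1 hv)
  simp only [leafMorphs, Set.mem_ofPred_eq, isMorph_node_iff, leaf_iff, forall_and]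
  tauto

theorem graft_bot_image_pi_leafMorphs [OrderBot P] {L : Set P} (hL : ts = [] → ⊥ ∈ L) :
    graft ⊥ '' Set.univ.pi (fun i : Fin ts.length => leafMorphs ts[i] L) =
      {μ ∈ leafMorphs (.node ts) L | μ (rootVx _) = ⊥} := by
  ext μ
  constructor
  · rintro ⟨f, hf, rfl⟩
    exact ⟨mem_leafMorphs_node_iff.2 ⟨hL, fun i => ⟨hf i trivial, fun _ => bot_le⟩⟩, rfl⟩
  · rintro ⟨hμ, hroot⟩
    refine ⟨fun i w => μ (subVx i w), fun i _ => ((mem_leafMorphs_node_iff.1 hμ).2 i).1, ?_⟩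
    rw [← hroot, graft_root_sub]

theorem comp_image_leafMorphs_preimage (e : P ↪o Q) (he : IsUpperSet (Set.range e)) (L : Set Q) :
    (fun ν => e ∘ ν) '' leafMorphs T (e ⁻¹' L) =
      {μ ∈ leafMorphs T L | μ (rootVx T) ∈ Set.range e} := by
  ext μ
  constructor
  · rintro ⟨ν, ⟨hν, hleaf⟩, rfl⟩
    exact ⟨⟨fun v w hvw => e.monotone (hν v w hvw), hleaf⟩, Set.mem_range_self _⟩
  · rintro ⟨⟨hμ, hleaf⟩, hroot⟩
    have range_mem (v : Vx T) : μ v ∈ Set.range e := he (hμ (rootVx T) v List.nil_prefix) hroot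
    choose ν hν using range_mem
    obtain rfl : e ∘ ν = μ := funext hν
    exact ⟨ν, ⟨fun v w hvw => e.le_iff_le.1 (hμ v w hvw), hleaf⟩, rfl⟩

theorem ncard_pi_leafMorphs (L : Set P) :
    (Set.univ.pi fun i : Fin ts.length => leafMorphs ts[i] L).ncard =
      (ts.map fun t => (leafMorphs t L).ncard).prod := by
  rw [← Nat.card_coe_set_eq, Nat.card_congr (Equiv.Set.univPi _), Nat.card_pi]
  exact Fin.prod_univ_fun_getElem ts fun t => (leafMorphs t L).ncard

theorem ncard_leafMorphs_node_root_eq_bot [OrderBot P] {L : Set P} (hL : ts = [] → ⊥ ∈ L) :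
    {μ ∈ leafMorphs (.node ts) L | μ (rootVx _) = ⊥}.ncard =
      (ts.map fun t => (leafMorphs t L).ncard).prod := by
  rw [← ncard_pi_leafMorphs, ← Set.ncard_image_of_injective _ (graft_injective ⊥),
    graft_bot_image_pi_leafMorphs hL]

theorem ncard_leafMorphs_root_ne_zero {m : ℕ} (L : Set (Fin (m + 1))) :
    {μ ∈ leafMorphs T L | μ (rootVx T) ≠ 0}.ncard = (leafMorphs T (Fin.succ ⁻¹' L)).ncard := by
  have range_succ : Set.range (Fin.succOrderEmb m) = {0}ᶜ := Fin.range_succ m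
  have isUpperSet_range : IsUpperSet (Set.range (Fin.succOrderEmb m)) := by
    rw [range_succ]
    exact fun a b hab ha hb => ha (Fin.le_zero_iff.1 (hab.trans_eq hb))
  have image_eq := comp_image_leafMorphs_preimage (T := T) _ isUpperSet_range L
  simp only [range_succ, Set.mem_compl_singleton_iff] at image_eq
  rw [← image_eq]
  exact Set.ncard_image_of_injective _ (Fin.succ_injective m).comp_left

theorem ncard_leafMorphs_node {m : ℕ} {L : Set (Fin (m + 1))} (hL : ts = [] → 0 ∈ L) :
    (leafMorphs (.node ts) L).ncard = (leafMorphs (.node ts) (Fin.succ ⁻¹' L)).ncard +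
      (ts.map fun t => (leafMorphs t L).ncard).prod := by
  have split_by_root : {μ ∈ leafMorphs (.node ts) L | μ (rootVx _) = 0}.ncard +
      {μ ∈ leafMorphs (.node ts) L | μ (rootVx _) ≠ 0}.ncard = (leafMorphs (.node ts) L).ncard :=
    Set.ncard_inter_add_ncard_sdiff_eq_ncard _ {μ : Vx (.node ts) → Fin (m + 1) | μ (rootVx _) = 0}
  rw [← split_by_root, ncard_leafMorphs_root_ne_zero, Nat.add_comm]
  exact congrArg _ (ncard_leafMorphs_node_root_eq_bot hL)

theorem const_image_eq_leafMorphs_triv (L : Set P) :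
    (fun p (_ : Vx triv) => p) '' L = leafMorphs triv L := by
  ext μ
  constructor
  · rintro ⟨p, hp, rfl⟩
    exact ⟨fun _ _ _ => le_rfl, fun _ _ => hp⟩
  · intro hμ
    refine ⟨μ (rootVx _), (mem_leafMorphs_node_iff.1 hμ).1 rfl, funext fun v => ?_⟩
    induction v using Vx.node_cases with
    | root => rfl
    | sub i => exact i.elim0

theorem ncard_leafMorphs_triv (L : Set P) : (leafMorphs triv L).ncard = L.ncard := by
  rw [← const_image_eq_leafMorphs_triv]
  exact Set.ncard_image_of_injective L fun _ _ h => congrFun h (rootVx triv)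

theorem ncard_leafMorphs_of_unique [Unique P] {L : Set P} (hL : default ∈ L) :
    (leafMorphs T L).ncard = 1 :=
  Set.ncard_eq_one.2 ⟨default, Set.eq_singleton_iff_unique_mem.2
    ⟨⟨fun _ _ _ => le_rfl, fun _ _ => hL⟩, fun _ _ => Subsingleton.elim _ _⟩⟩

end Morphisms

theorem restrCount_eq_ncard (m : ℕ) (T : PTree) :
    restrCount m T = (leafMorphs T {a : Fin m | (a : ℕ) = m - 1}).ncard :=
  Nat.card_coe_set_eq _

theorem morphCount_eq_ncard (m : ℕ) (T : PTree) :
    morphCount m T = (leafMorphs T (Set.univ : Set (Fin m))).ncard := by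
  simp only [morphCount, leafMorphs, Set.mem_univ, implies_true, and_true]
  exact Nat.card_coe_set_eq _

theorem restrCount_one (T : PTree) : restrCount 1 T = 1 := by
  rw [restrCount_eq_ncard]
  exact ncard_leafMorphs_of_unique rfl

theorem morphCount_one (T : PTree) : morphCount 1 T = 1 := by
  rw [morphCount_eq_ncard, ncard_leafMorphs_of_unique (Set.mem_univ _)]

theorem restrCount_triv (m : ℕ) : restrCount (m + 1) triv = 1 := by
  rw [restrCount_eq_ncard, ncard_leafMorphs_triv, Set.ncard_eq_one]
  exact ⟨Fin.last m, Set.ext fun _ => (Fin.ext_iff (b := Fin.last m)).symm⟩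

theorem morphCount_triv (m : ℕ) : morphCount m triv = m := by
  rw [morphCount_eq_ncard, ncard_leafMorphs_triv, Set.ncard_univ, Nat.card_fin]

theorem restrCount_node (m : ℕ) {ts : List PTree} (hts : ts ≠ []) :
    restrCount (m + 1) (.node ts) =
      restrCount m (.node ts) + (ts.map (restrCount (m + 1))).prod := by
  have preimage_top : Fin.succ ⁻¹' {a : Fin (m + 1) | (a : ℕ) = m} =
      {a : Fin m | (a : ℕ) = m - 1} := by
    ext a
    simp only [Set.mem_preimage, Set.mem_ofPred_eq, Fin.val_succ]
    omega
  simp only [funext (restrCount_eq_ncard _), Nat.add_sub_cancel]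
  rw [ncard_leafMorphs_node fun h => absurd h hts, preimage_top]

theorem morphCount_node (m : ℕ) (ts : List PTree) :
    morphCount (m + 1) (.node ts) =
      morphCount m (.node ts) + (ts.map (morphCount (m + 1))).prod := by
  simp only [funext (morphCount_eq_ncard _)]
  rw [ncard_leafMorphs_node fun _ => Set.mem_univ 0, Set.preimage_univ]

end PTree

theorem statement11_general (m : ℕ) :
    PTree.restrCount (m + 1) PTree.triv = 1 ∧
    PTree.morphCount m PTree.triv = m ∧
    ∀ ts : List PTree,
      (ts ≠ [] → PTree.restrCount (m + 1) (.node ts) =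
        PTree.restrCount m (.node ts) + (ts.map (PTree.restrCount (m + 1))).prod) ∧
      PTree.morphCount (m + 1) (.node ts) =
        PTree.morphCount m (.node ts) + (ts.map (PTree.morphCount (m + 1))).prod :=
  ⟨PTree.restrCount_triv m, PTree.morphCount_triv m,
    fun ts => ⟨PTree.restrCount_node m, PTree.morphCount_node m ts⟩⟩

/-- Counting (restricted) morphisms into the chain `{1 < 2}`: writing `γ(T)`
for the number of restricted morphisms (those sending every leaf to `2`) and
`γ̃(T)` for the number of all morphisms, one has `γ(trivial) = 1`,
`γ̃(trivial) = 2`, and for every nontrivial tree with principal subtrees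
`T₁, …, T_k`: `γ(T) = 1 + ∏ γ(T_i)` and `γ̃(T) = 1 + ∏ γ̃(T_i)`. -/
theorem statement11 :
    PTree.restrCount 2 PTree.triv = 1 ∧
    PTree.morphCount 2 PTree.triv = 2 ∧
    ∀ ts : List PTree, ts ≠ [] →
      PTree.restrCount 2 (.node ts) = 1 + (ts.map (PTree.restrCount 2)).prod ∧
      PTree.morphCount 2 (.node ts) = 1 + (ts.map (PTree.morphCount 2)).prod := by
  refine ⟨(statement11_general 1).1, (statement11_general 2).2.1, fun ts hts => ?_⟩
  have recurrence := (statement11_general 1).2.2 ts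
  rw [PTree.restrCount_one, PTree.morphCount_one] at recurrence
  exact ⟨recurrence.1 hts, recurrence.2⟩
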